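/- For any pair (X^a u, Y^b v) ∈ Deriv(𝒫_𝒞), the variance relation a · ⟨u⟩ = b · ⟨v⟩ holds in the sign monoid {⊕,⊖}. -/

import Mathlib

/-- The two-element sign monoid `{⊕, ⊖}` of variances. -/
inductive Sign : Type where
  | pos
  | neg
deriving DecidableEq, Repr

/-- Multiplication in the sign monoid (`⊕` is the identity, `⊖ · ⊖ = ⊕`). -/
def Sign.mul : Sign → Sign → Sign
  | .pos, s => s
  | .neg, .pos => .neg
  | .neg, .neg => .pos

/-- Variance of a word in `Σ*`: `⟨ε⟩ = ⊕`, `⟨xw⟩ = ⟨x⟩·⟨w⟩`. -/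
def wordSign {L : Type} (sgn : L → Sign) : List L → Sign
  | [] => .pos
  | x :: w => (sgn x).mul (wordSign sgn w)

/-- A derived type variable `α.w` with base type variable `α ∈ 𝒱` and word `w ∈ Σ*`. -/
structure DTV (V L : Type) : Type where
  base : V
  word : List L

/-- Appending a single field label to a derived type variable: `α.ℓ`. -/
def DTV.app {V L : Type} (α : DTV V L) (ℓ : L) : DTV V L :=
  ⟨α.base, α.word ++ [ℓ]⟩

/-- A constraint: either `VAR X` or `X ⊑ Y` for derived type variables. -/
inductive Constraint (V L : Type) : Type where
  | var : DTV V L → Constraint V L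
  | sub : DTV V L → DTV V L → Constraint V L

/-- Entailment `𝒞 ⊢ c`: the least relation containing `𝒞` and closed under the
deduction rules T-Left, T-Right, T-InheritL, T-InheritR, T-Prefix, S-Refl,
S-Trans, S-Field⊕, S-Field⊖ and S-Pointer. -/
inductive Entails {V L : Type} (sgn : L → Sign) (load store : L)
    (C : Set (Constraint V L)) : Constraint V L → Prop where
  | ax {c} : c ∈ C → Entails sgn load store C c
  | tLeft {α β} : Entails sgn load store C (.sub α β) →
      Entails sgn load store C (.var α)
  | tRight {α β} : Entails sgn load store C (.sub α β) →
      Entails sgn load store C (.var β)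
  | tInheritL {α β : DTV V L} {ℓ} : Entails sgn load store C (.sub α β) →
      Entails sgn load store C (.var (α.app ℓ)) →
      Entails sgn load store C (.var (β.app ℓ))
  | tInheritR {α β : DTV V L} {ℓ} : Entails sgn load store C (.sub α β) →
      Entails sgn load store C (.var (β.app ℓ)) →
      Entails sgn load store C (.var (α.app ℓ))
  | tPrefix {α : DTV V L} {ℓ} : Entails sgn load store C (.var (α.app ℓ)) →
      Entails sgn load store C (.var α)
  | sRefl {α} : Entails sgn load store C (.var α) →
      Entails sgn load store C (.sub α α)
  | sTrans {α β γ} : Entails sgn load store C (.sub α β) →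
      Entails sgn load store C (.sub β γ) →
      Entails sgn load store C (.sub α γ)
  | sFieldPos {α β : DTV V L} {ℓ} : Entails sgn load store C (.sub α β) →
      Entails sgn load store C (.var (β.app ℓ)) → sgn ℓ = .pos →
      Entails sgn load store C (.sub (α.app ℓ) (β.app ℓ))
  | sFieldNeg {α β : DTV V L} {ℓ} : Entails sgn load store C (.sub α β) →
      Entails sgn load store C (.var (β.app ℓ)) → sgn ℓ = .neg →
      Entails sgn load store C (.sub (β.app ℓ) (α.app ℓ))
  | sPointer {α : DTV V L} : Entails sgn load store C (.var (α.app load)) →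
      Entails sgn load store C (.var (α.app store)) →
      Entails sgn load store C (.sub (α.app store) (α.app load))

/-- `𝒞` is closed under T-Left, T-Right and T-Prefix. -/
def ClosedTLRP {V L : Type} (C : Set (Constraint V L)) : Prop :=
  (∀ α β : DTV V L, Constraint.sub α β ∈ C →
      Constraint.var α ∈ C ∧ Constraint.var β ∈ C) ∧
  (∀ (α : DTV V L) (ℓ : L), Constraint.var (α.app ℓ) ∈ C →
      Constraint.var α ∈ C)

/-- Control states of the pushdown system `𝒫_𝒞`:
`Ṽ = ((lhs(𝒱_i) ⨿ rhs(𝒱_i) ⨿ 𝒱_u) × {⊕,⊖}) ∪ {#Start, #End}`.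
`lt x a` is `(x_L)^a`, `rt x a` is `(x_R)^a`, `un x a` is `x^a` for
uninteresting `x`. -/
inductive Ctl (V : Type) : Type where
  | start : Ctl V
  | fin : Ctl V
  | lt : V → Sign → Ctl V
  | rt : V → Sign → Ctl V
  | un : V → Sign → Ctl V

/-- Stack symbols `Σ̃ = Σ ∪ {v^⊕, v^⊖ : v ∈ 𝒱_i}`. -/
inductive StkSym (V L : Type) : Type where
  | lbl : L → StkSym V L
  | tv : V → Sign → StkSym V L

/-- A word of field labels seen as a stack word. -/
def symWord {V L : Type} (u : List L) : List (StkSym V L) :=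
  u.map StkSym.lbl

/-- `lhs(x)^a`: tagged `x_L` if `x` is interesting, plain otherwise. -/
def lhsCtl {V : Type} (I : V → Bool) (x : V) (a : Sign) : Ctl V :=
  if I x then .lt x a else .un x a

/-- `rhs(x)^a`: tagged `x_R` if `x` is interesting, plain otherwise. -/
def rhsCtl {V : Type} (I : V → Bool) (x : V) (a : Sign) : Ctl V :=
  if I x then .rt x a else .un x a

/-- A configuration of an unconstrained pushdown system: a control state
together with a stack word. -/
abbrev PDSConfig (V L : Type) : Type := Ctl V × List (StkSym V L)

/-- A transition rule `⟨X; u⟩ ↪ ⟨Y; v⟩`. -/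
abbrev PDSRule (V L : Type) : Type := PDSConfig V L × PDSConfig V L

/-- `rule⊕(p.u ⊑ q.v) = ⟨lhs(p)^{⟨u⟩}; u⟩ ↪ ⟨rhs(q)^{⟨v⟩}; v⟩`. -/
def rulePos {V L : Type} (I : V → Bool) (sgn : L → Sign)
    (c : DTV V L × DTV V L) : PDSRule V L :=
  ((lhsCtl I c.1.base (wordSign sgn c.1.word), symWord c.1.word),
   (rhsCtl I c.2.base (wordSign sgn c.2.word), symWord c.2.word))

/-- `rule⊖(p.u ⊑ q.v) = ⟨lhs(q)^{⊖·⟨v⟩}; v⟩ ↪ ⟨rhs(p)^{⊖·⟨u⟩}; u⟩`. -/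
def ruleNeg {V L : Type} (I : V → Bool) (sgn : L → Sign)
    (c : DTV V L × DTV V L) : PDSRule V L :=
  ((lhsCtl I c.2.base (Sign.neg.mul (wordSign sgn c.2.word)), symWord c.2.word),
   (rhsCtl I c.1.base (Sign.neg.mul (wordSign sgn c.1.word)), symWord c.1.word))

/-- The transition rules `Δ = Δ_𝒞 ∪ Δ_ptr ∪ Δ_start ∪ Δ_end` of the pushdown
system `𝒫_𝒞` associated to a set `𝒞` of subtype constraints between derived
type variables. -/
def Delta {V L : Type} (I : V → Bool) (sgn : L → Sign) (load store : L)
    (C : Set (DTV V L × DTV V L)) : Set (PDSRule V L) :=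
  {r | ∃ c ∈ C, r = rulePos I sgn c ∨ r = ruleNeg I sgn c} ∪
  {r | ∃ v : DTV V L,
      r = rulePos I sgn (v.app store, v.app load) ∨
      r = ruleNeg I sgn (v.app store, v.app load)} ∪
  {r | ∃ (v : V) (a : Sign), I v ∧
      r = ((.start, [StkSym.tv v a]), (.lt v a, ([] : List (StkSym V L))))} ∪
  {r | ∃ (v : V) (a : Sign), I v ∧
      r = ((.rt v a, ([] : List (StkSym V L))), (.fin, [StkSym.tv v a]))}

/-- One transition step of an unconstrained pushdown system:
`(X, w) ⟶ (Y, w')` iff there is a suffix `s` and a rule `⟨X; u⟩ ↪ ⟨Y; v⟩`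
with `w = us` and `w' = vs`. -/
def PDSStep {V L : Type} (Δ : Set (PDSRule V L))
    (c c' : PDSConfig V L) : Prop :=
  ∃ r ∈ Δ, ∃ s : List (StkSym V L),
    c = (r.1.1, r.1.2 ++ s) ∧ c' = (r.2.1, r.2.2 ++ s)

/-- The reflexive-transitive closure `⟶*` of the transition relation. -/
def PDSSteps {V L : Type} (Δ : Set (PDSRule V L)) :
    PDSConfig V L → PDSConfig V L → Prop :=
  Relation.ReflTransGen (PDSStep Δ)

/-- `Deriv(𝒫_𝒞)`, as a relation on triples `X^a u`: `X, Y` are interesting and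
`(#Start, X^a u) ⟶* (#End, Y^b v)`. -/
def Deriv {V L : Type} (I : V → Bool) (sgn : L → Sign) (load store : L)
    (C : Set (DTV V L × DTV V L)) :
    (V × Sign × List L) → (V × Sign × List L) → Prop :=
  fun p q =>
    I p.1 ∧ I q.1 ∧
      PDSSteps (Delta I sgn load store C)
        (.start, StkSym.tv p.1 p.2.1 :: symWord p.2.2)
        (.fin, StkSym.tv q.1 q.2.1 :: symWord q.2.2)

/-- `Deriv'(𝒫_𝒞) = {(X.u, Y.v) : (X^{⟨u⟩} u, Y^{⟨v⟩} v) ∈ Deriv(𝒫_𝒞)}`. -/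
def Deriv' {V L : Type} (I : V → Bool) (sgn : L → Sign) (load store : L)
    (C : Set (DTV V L × DTV V L)) :
    (V × List L) → (V × List L) → Prop :=
  fun p q =>
    Deriv I sgn load store C (p.1, wordSign sgn p.2, p.2)
      (q.1, wordSign sgn q.2, q.2)

/-!
Give a configuration `(X^a, w)` the total variance `a · ⟨w⟩`, where `#Start` and `#End` count as `⊕`
and a stack symbol `v^a` as `a`. A configuration `(x^{s·⟨u⟩}, u)` then has variance
`s · ⟨u⟩ · ⟨u⟩ = s`, so both sides of every `rule⊕(c)` have variance `⊕` and both sides of every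
`rule⊖(c)` have variance `⊖`, while `Δ_start` and `Δ_end` only move a sign between the stack and the
control state. Appending a common suffix multiplies both sides by the same sign, so the total
variance is invariant along every run.
-/

section Variance

variable {V L : Type} {I : V → Bool} {sgn : L → Sign}

theorem Sign.mul_assoc (a b c : Sign) : (a.mul b).mul c = a.mul (b.mul c) := by
  cases a <;> cases b <;> cases c <;> rfl

theorem Sign.mul_mul_self_right (a b : Sign) : (a.mul b).mul b = a := by
  cases a <;> cases b <;> rfl

theorem wordSign_append (sgn : L → Sign) (u v : List L) :
    wordSign sgn (u ++ v) = (wordSign sgn u).mul (wordSign sgn v) := by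
  induction u with
  | nil => rfl
  | cons x u ih => simp only [List.cons_append, wordSign, ih, Sign.mul_assoc]

/-- The variance of a stack symbol, which extends the variance of labels to `Σ̃` by
`⟨v^a⟩ = a`. -/
def StkSym.variance (sgn : L → Sign) : StkSym V L → Sign
  | .lbl l => sgn l
  | .tv _ a => a

/-- The variance of a control state: the sign that it is decorated with, where the undecorated
states `#Start` and `#End` count as `⊕`. -/
def Ctl.variance : Ctl V → Sign
  | .start | .fin => .pos
  | .lt _ a | .rt _ a | .un _ a => a

/-- The total variance of a configuration, the invariant of the runs of `𝒫_𝒞`. -/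
def PDSConfig.variance (sgn : L → Sign) (c : PDSConfig V L) : Sign :=
  c.1.variance.mul (wordSign (StkSym.variance sgn) c.2)

/-- A transition rule preserves variance if its two sides, read as configurations, have the same
total variance. -/
def PDSRule.PreservesVariance (sgn : L → Sign) (r : PDSRule V L) : Prop :=
  PDSConfig.variance sgn r.1 = PDSConfig.variance sgn r.2

theorem wordSign_symWord (sgn : L → Sign) (u : List L) :
    wordSign (StkSym.variance sgn) (symWord u : List (StkSym V L)) = wordSign sgn u := by
  induction u with
  | nil => rfl
  | cons x u ih => exact congrArg (Sign.mul (sgn x)) ih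

theorem variance_lhsCtl (I : V → Bool) (x : V) (a : Sign) : (lhsCtl I x a).variance = a := by
  unfold lhsCtl
  split <;> rfl

theorem variance_rhsCtl (I : V → Bool) (x : V) (a : Sign) : (rhsCtl I x a).variance = a := by
  unfold rhsCtl
  split <;> rfl

theorem PDSConfig.variance_lhsCtl_symWord (I : V → Bool) (sgn : L → Sign) (x : V) (s : Sign)
    (u : List L) :
    PDSConfig.variance sgn (lhsCtl I x (s.mul (wordSign sgn u)), symWord u) = s := by
  rw [PDSConfig.variance, variance_lhsCtl, wordSign_symWord, Sign.mul_mul_self_right]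

theorem PDSConfig.variance_rhsCtl_symWord (I : V → Bool) (sgn : L → Sign) (x : V) (s : Sign)
    (u : List L) :
    PDSConfig.variance sgn (rhsCtl I x (s.mul (wordSign sgn u)), symWord u) = s := by
  rw [PDSConfig.variance, variance_rhsCtl, wordSign_symWord, Sign.mul_mul_self_right]

theorem PDSConfig.variance_append (sgn : L → Sign) (x : Ctl V) (w s : List (StkSym V L)) :
    PDSConfig.variance sgn (x, w ++ s) =
      (PDSConfig.variance sgn (x, w)).mul (wordSign (StkSym.variance sgn) s) := by
  simp only [PDSConfig.variance, wordSign_append, Sign.mul_assoc]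

theorem rulePos_preservesVariance (I : V → Bool) (sgn : L → Sign) (c : DTV V L × DTV V L) :
    (rulePos I sgn c).PreservesVariance sgn :=
  -- The sign `⟨u⟩` in `rule⊕` is read as `⊕ · ⟨u⟩`.
  (PDSConfig.variance_lhsCtl_symWord I sgn c.1.base .pos c.1.word).trans
    (PDSConfig.variance_rhsCtl_symWord I sgn c.2.base .pos c.2.word).symm

theorem ruleNeg_preservesVariance (I : V → Bool) (sgn : L → Sign) (c : DTV V L × DTV V L) :
    (ruleNeg I sgn c).PreservesVariance sgn :=
  (PDSConfig.variance_lhsCtl_symWord I sgn c.2.base .neg c.2.word).trans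
    (PDSConfig.variance_rhsCtl_symWord I sgn c.1.base .neg c.1.word).symm

theorem preservesVariance_of_mem_Delta {load store : L} {C : Set (DTV V L × DTV V L)}
    {r : PDSRule V L} (hr : r ∈ Delta I sgn load store C) : r.PreservesVariance sgn := by
  rcases hr with ((⟨c, -, rfl | rfl⟩ | ⟨α, rfl | rfl⟩) | ⟨v, a, -, rfl⟩) | ⟨v, a, -, rfl⟩
  · exact rulePos_preservesVariance I sgn c
  · exact ruleNeg_preservesVariance I sgn c
  · exact rulePos_preservesVariance I sgn (α.app store, α.app load)
  · exact ruleNeg_preservesVariance I sgn (α.app store, α.app load)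
  · rfl
  · rfl

theorem PDSStep.variance_eq {Δ : Set (PDSRule V L)} (hΔ : ∀ r ∈ Δ, r.PreservesVariance sgn)
    {c d : PDSConfig V L} (h : PDSStep Δ c d) : c.variance sgn = d.variance sgn := by
  obtain ⟨r, hr, s, rfl, rfl⟩ := h
  rw [PDSConfig.variance_append, PDSConfig.variance_append, hΔ r hr]

theorem PDSSteps.variance_eq {Δ : Set (PDSRule V L)} (hΔ : ∀ r ∈ Δ, r.PreservesVariance sgn)
    {c d : PDSConfig V L} (h : PDSSteps Δ c d) : c.variance sgn = d.variance sgn := by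
  induction h with
  | refl => rfl
  | tail _ hstep ih => exact ih.trans (hstep.variance_eq hΔ)

theorem deriv_variance_general {load store : L} {C : Set (DTV V L × DTV V L)} {X Y : V}
    {a b : Sign} {u v : List L} (h : Deriv I sgn load store C (X, a, u) (Y, b, v)) :
    a.mul (wordSign sgn u) = b.mul (wordSign sgn v) := by
  obtain ⟨-, -, hrun⟩ := h
  have hvar := hrun.variance_eq (sgn := sgn) fun _ => preservesVariance_of_mem_Delta
  simpa only [PDSConfig.variance, Ctl.variance, wordSign, StkSym.variance, wordSign_symWord,
    Sign.mul] using hvar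

end Variance

/-- if `(X^a u, Y^b v) ∈ Deriv(𝒫_𝒞)` then the variance relation
`a · ⟨u⟩ = b · ⟨v⟩` holds in the sign monoid. -/
theorem deriv_variance {V L : Type} (I : V → Bool) (sgn : L → Sign)
    (load store : L) (hload : sgn load = .pos) (hstore : sgn store = .neg)
    (C : Set (DTV V L × DTV V L))
    (X Y : V) (a b : Sign) (u v : List L)
    (h : Deriv I sgn load store C (X, a, u) (Y, b, v)) :
    a.mul (wordSign sgn u) = b.mul (wordSign sgn v) :=
  deriv_variance_general h
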